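/- arXiv:1701.06244 — 2 statements merged into one kernel-verified Lean document; each statement's English description precedes it below -/
import Mathlib

section
/- Let p ∈ ℕ ∪ {∞}. Every morphism h : l₁ → l₂ of □_p can be written as a composition of face maps followed by a composition of degeneracies: there exist m ∈ ℕ, a finite list of face maps f_{⋆₁}(m, a₁), …, f_{⋆_r}(l₁−1, a_r) composing to a morphism s : l₁ → m of □_p, and a finite list of degeneracies d(m, b₁), …, d(l₂−1, b_s) composing to a morphism ι : m → l₂ of □_p, such that h = ι ∘ s; moreover these lists can be chosen so that, read in composition order (from right to left, i.e., in the order in which the maps are applied), the second arguments a_r, …, a₁ of the face maps are strictly decreasing and the second arguments b₁, …, b_s of the degeneracies are non-increasing. -/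
/-- Kleisli composition with error propagation: `(kcomp g f) i = g j` if `f i = Sum.inl j`,
and `Sum.inr ⋆` if `f i = Sum.inr ⋆`. -/
def kcomp {l₁ l₂ l₃ : ℕ} (g : Fin l₂ → Fin l₃ ⊕ Bool) (f : Fin l₁ → Fin l₂ ⊕ Bool) :
    Fin l₁ → Fin l₃ ⊕ Bool := fun i =>
  match f i with
  | Sum.inl j => g j
  | Sum.inr b => Sum.inr b

/-- The face map `f_⋆(l,k) : l+1 → l` in the category `□`. -/
def faceMap (b : Bool) (l k : ℕ) (hk : k ≤ l) : Fin (l + 1) → Fin l ⊕ Bool := fun i =>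
  if h1 : (i : ℕ) < k then Sum.inl ⟨i, by omega⟩
  else if h2 : (i : ℕ) = k then Sum.inr b
  else Sum.inl ⟨(i : ℕ) - 1, by have := i.isLt; omega⟩

/-- The degeneracy `d(l,k) : l → l+1` in the category `□`. -/
def degenMap (l k : ℕ) : Fin l → Fin (l + 1) ⊕ Bool := fun i =>
  if (i : ℕ) < k then Sum.inl ⟨i, by have := i.isLt; omega⟩
  else Sum.inl ⟨(i : ℕ) + 1, by have := i.isLt; omega⟩

/-- Membership in the subcategory `□_p` of `□` (for `p ∈ ℕ ∪ {∞}`): `BoxP p l₁ l₂ h` says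
that `h : Fin l₁ → Fin l₂ ⊕ Bool` is a morphism `l₁ → l₂` of `□_p`, i.e. is generated
under identities and composition by the face maps `f_⋆(l,k)` for `⋆ ∈ Bool`, `k ≤ l < p`
and the degeneracies `d(l,k)` for `k ≤ l < p`. -/
inductive BoxP (p : ℕ∞) : ∀ (l₁ l₂ : ℕ), (Fin l₁ → Fin l₂ ⊕ Bool) → Prop
  | id (l : ℕ) (hl : (l : ℕ∞) ≤ p) : BoxP p l l Sum.inl
  | face (b : Bool) (l k : ℕ) (hk : k ≤ l) (hl : (l : ℕ∞) < p) :
      BoxP p (l + 1) l (faceMap b l k hk)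
  | degen (l k : ℕ) (hk : k ≤ l) (hl : (l : ℕ∞) < p) :
      BoxP p l (l + 1) (degenMap l k)
  | comp {l₁ l₂ l₃ : ℕ} {f : Fin l₁ → Fin l₂ ⊕ Bool} {g : Fin l₂ → Fin l₃ ⊕ Bool} :
      BoxP p l₁ l₂ f → BoxP p l₂ l₃ g → BoxP p l₁ l₃ (kcomp g f)

/-- `FaceComp p l₁ l₂ s L` says that `s : l₁ → l₂` is the composite of the list `L` of face
maps of `□_p`, where `L` records, in order of application (right to left in composition
order), the labels `⋆ ∈ Bool` and second arguments `k` of the face maps. -/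
inductive FaceComp (p : ℕ∞) : ∀ (l₁ l₂ : ℕ), (Fin l₁ → Fin l₂ ⊕ Bool) → List (Bool × ℕ) → Prop
  | nil (l : ℕ) (hl : (l : ℕ∞) ≤ p) : FaceComp p l l Sum.inl []
  | cons {l m : ℕ} {f : Fin l → Fin m ⊕ Bool} {L : List (Bool × ℕ)}
      (b : Bool) (k : ℕ) (hk : k ≤ l) (hl : (l : ℕ∞) < p) :
      FaceComp p l m f L → FaceComp p (l + 1) m (kcomp f (faceMap b l k hk)) ((b, k) :: L)

/-- `DegenComp p l₁ l₂ ι L` says that `ι : l₁ → l₂` is the composite of the list `L` of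
degeneracies of `□_p`, where `L` records, in order of application (right to left in
composition order), the second arguments `k` of the degeneracies. -/
inductive DegenComp (p : ℕ∞) : ∀ (l₁ l₂ : ℕ), (Fin l₁ → Fin l₂ ⊕ Bool) → List ℕ → Prop
  | nil (l : ℕ) (hl : (l : ℕ∞) ≤ p) : DegenComp p l l Sum.inl []
  | cons {m l : ℕ} {g : Fin m → Fin l ⊕ Bool} {L : List ℕ}
      (k : ℕ) (hk : k ≤ l) (hl : (l : ℕ∞) < p) :
      DegenComp p m l g L → DegenComp p m (l + 1) (kcomp (degenMap l k) g) (L ++ [k])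

/-- Partial strict monotonicity. -/
def PMono {l₁ l₂ : ℕ} (h : Fin l₁ → Fin l₂ ⊕ Bool) : Prop :=
  ∀ i j a b, i < j → h i = Sum.inl a → h j = Sum.inl b → a < b

theorem kcomp_assoc' {l₁ l₂ l₃ l₄ : ℕ} (h : Fin l₃ → Fin l₄ ⊕ Bool)
    (g : Fin l₂ → Fin l₃ ⊕ Bool) (f : Fin l₁ → Fin l₂ ⊕ Bool) :
    kcomp (kcomp h g) f = kcomp h (kcomp g f) := by
  funext i
  simp only [kcomp]
  cases f i <;> rfl

theorem enat_lt_of_succ_le {l : ℕ} {p : ℕ∞} (h : ((l + 1 : ℕ) : ℕ∞) ≤ p) : (l : ℕ∞) < p :=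
  lt_of_lt_of_le (by exact_mod_cast Nat.lt_succ_self l) h

theorem enat_succ_le_of_lt {l : ℕ} {p : ℕ∞} (h : (l : ℕ∞) < p) : ((l + 1 : ℕ) : ℕ∞) ≤ p := by
  push_cast
  exact Order.add_one_le_of_lt h

theorem boxP_props {p : ℕ∞} {l₁ l₂ : ℕ} {h : Fin l₁ → Fin l₂ ⊕ Bool} (hh : BoxP p l₁ l₂ h) :
    (l₁ : ℕ∞) ≤ p ∧ (l₂ : ℕ∞) ≤ p ∧ PMono h := by
  induction hh with
  | id l hl =>
    refine ⟨hl, hl, ?_⟩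
    intro i j a b hij ha hb
    cases ha; cases hb; exact hij
  | face b l k hk hl =>
    refine ⟨enat_succ_le_of_lt hl, hl.le, ?_⟩
    intro i j a b hij ha hb
    simp only [faceMap] at ha hb
    rw [Fin.lt_def] at hij ⊢
    split_ifs at ha hb <;> cases ha <;> cases hb <;> simp only [] <;> omega
  | degen l k hk hl =>
    refine ⟨hl.le, enat_succ_le_of_lt hl, ?_⟩
    intro i j a b hij ha hb
    simp only [degenMap] at ha hb
    rw [Fin.lt_def] at hij ⊢
    split_ifs at ha hb <;> cases ha <;> cases hb <;> simp only [] <;> omega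
  | @comp l₁ l₂ l₃ f g _ _ ihf ihg =>
    refine ⟨ihf.1, ihg.2.1, ?_⟩
    intro i j a b hij ha hb
    simp only [kcomp] at ha hb
    rcases hi : f i with c | c <;> rw [hi] at ha <;> simp only [] at ha
    · rcases hj : f j with d | d <;> rw [hj] at hb <;> simp only [] at hb
      · exact ihg.2.2 c d a b (ihf.2.2 i j c d hij hi hj) ha hb
      · cases hb
    · cases ha

theorem degen_fact (p : ℕ∞) (m : ℕ) : ∀ (n l K : ℕ) (g : Fin m → Fin l), l - K = n →
    (l : ℕ∞) ≤ p → StrictMono g → (∀ j : Fin l, (j : ℕ) < K → ∃ i, g i = j) →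
    ∃ L : List ℕ, DegenComp p m l (fun i => Sum.inl (g i)) L ∧ (∀ x ∈ L, K ≤ x) ∧
      L.Pairwise (· ≥ ·) := by
  intro n
  induction n with
  | zero =>
    intro l K g hn hl hg hK
    have hs : Function.Surjective g := fun j => hK j (by omega)
    have hml : m = l := by
      simpa using Fintype.card_of_bijective ⟨hg.injective, hs⟩
    subst hml
    have : g = id := (StrictMono.range_inj hg strictMono_id).mp (by simp [hs.range_eq])
    subst this
    exact ⟨[], DegenComp.nil m hl, by simp, by simp⟩
  | succ n ih =>
    intro l K g hn hl hg hK
    by_cases hit : ∃ i, (g i : ℕ) = K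
    · obtain ⟨L, h1, h2, h3⟩ := ih l (K + 1) g (by omega) hl hg (by
        intro j hj
        rcases Nat.lt_succ_iff_lt_or_eq.mp hj with h | h
        · exact hK j h
        · obtain ⟨i, hi⟩ := hit
          exact ⟨i, Fin.ext (by omega)⟩)
      exact ⟨L, h1, fun x hx => by have := h2 x hx; omega, h3⟩
    · push Not at hit
      obtain ⟨l, rfl⟩ : ∃ l', l = l' + 1 := ⟨l - 1, by omega⟩
      have hlt := enat_lt_of_succ_le hl
      let g' : Fin m → Fin l := fun i =>
        ⟨if (g i : ℕ) < K then g i else g i - 1, by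
          have := (g i).isLt
          have := hit i
          split_ifs <;> omega⟩
      have hg' : StrictMono g' := by
        intro i j hij
        have h0 := hg hij
        have := hit i
        have := hit j
        rw [Fin.lt_def] at h0 ⊢
        simp only [g']
        split_ifs <;> omega
      obtain ⟨L, h1, h2, h3⟩ := ih l K g' (by omega) hlt.le hg' (by
        intro j hj
        obtain ⟨i, hi⟩ := hK ⟨j, by omega⟩ hj
        refine ⟨i, Fin.ext ?_⟩
        simp [g', hi, hj])
      refine ⟨L ++ [K], ?_, ?_, ?_⟩
      · have := DegenComp.cons K (by omega) hlt h1
        convert this using 1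
        funext i
        have := hit i
        simp only [kcomp, degenMap, g']
        split_ifs <;> first | omega | rfl | (congr 1; apply Fin.ext; simp only []; omega)
      · intro x hx
        rcases List.mem_append.mp hx with h | h
        · exact h2 x h
        · simp at h; omega
      · rw [List.pairwise_append]
        refine ⟨h3, by simp, ?_⟩
        intro a ha b hb
        simp at hb
        subst hb
        exact h2 a ha

theorem face_fact (p : ℕ∞) (l₂ : ℕ) (hl₂ : (l₂ : ℕ∞) ≤ p) : ∀ (K l₁ : ℕ)
    (h : Fin l₁ → Fin l₂ ⊕ Bool), (l₁ : ℕ∞) ≤ p → PMono h →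
    (∀ i : Fin l₁, K ≤ (i : ℕ) → ∃ a, h i = Sum.inl a) →
    ∃ (m : ℕ) (Lf : List (Bool × ℕ)) (Ld : List ℕ)
      (s : Fin l₁ → Fin m ⊕ Bool) (ι : Fin m → Fin l₂ ⊕ Bool),
      FaceComp p l₁ m s Lf ∧ DegenComp p m l₂ ι Ld ∧ h = kcomp ι s ∧
      (∀ x ∈ Lf.map Prod.snd, x < K) ∧
      (Lf.map Prod.snd).Pairwise (· > ·) ∧ Ld.Pairwise (· ≥ ·) := by
  intro K
  induction K with
  | zero =>
    intro l₁ h hl hm hK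
    choose g hg using fun i => hK i (Nat.zero_le _)
    obtain ⟨L, h1, -, h3⟩ := degen_fact p l₁ _ l₂ 0 g rfl hl₂
      (fun i j hij => hm i j _ _ hij (hg i) (hg j)) (by simp)
    refine ⟨l₁, [], L, Sum.inl, _, FaceComp.nil l₁ hl, h1, ?_, by simp, by simp, h3⟩
    funext i
    simp [kcomp, hg]
  | succ K ih =>
    intro l₁ h hl hm hK
    by_cases hb : ∃ (hk : K < l₁) (b : Bool), h ⟨K, hk⟩ = Sum.inr b
    · obtain ⟨hk, b, hb⟩ := hb
      obtain ⟨l, rfl⟩ : ∃ l', l₁ = l' + 1 := ⟨l₁ - 1, by omega⟩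
      have hlt := enat_lt_of_succ_le hl
      let e : Fin l → Fin (l + 1) := fun i =>
        ⟨if (i : ℕ) < K then i else i + 1, by have := i.isLt; split_ifs <;> omega⟩
      have he : ∀ i j, i < j → e i < e j := by
        intro i j hij
        rw [Fin.lt_def] at hij ⊢
        simp only [e]
        split_ifs <;> omega
      obtain ⟨m, Lf, Ld, s, ι, h1, h2, h3, h4, h5, h6⟩ := ih l (fun i => h (e i)) hlt.le
        (fun i j a b hij ha hb => hm _ _ a b (he i j hij) ha hb)
        (fun i hi => hK (e i) (by simp only [e]; split_ifs <;> omega))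
      refine ⟨m, (b, K) :: Lf, Ld, _, ι, FaceComp.cons b K (by omega) hlt h1, h2, ?_, ?_, ?_, h6⟩
      · rw [← kcomp_assoc', ← h3]
        funext i
        simp only [kcomp, faceMap]
        by_cases c1 : (i : ℕ) < K
        · simp [c1, e]
        · by_cases c2 : (i : ℕ) = K
          · have : i = ⟨K, hk⟩ := Fin.ext c2
            subst this
            simp [hb]
          · have c3 : ¬ ((i : ℕ) - 1 < K) := by omega
            simp only [c1, c2, dite_false, e, c3, if_false]
            congr 1
            apply Fin.ext
            simp only []
            omega
      · intro x hx
        simp only [List.map_cons, List.mem_cons] at hx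
        rcases hx with rfl | hx
        · omega
        · have := h4 x hx; omega
      · rw [List.map_cons, List.pairwise_cons]
        exact ⟨h4, h5⟩
    · obtain ⟨m, Lf, Ld, s, ι, h1, h2, h3, h4, h5⟩ := ih l₁ h hl hm (by
        intro i hi
        rcases Nat.eq_or_lt_of_le hi with h' | h'
        · rcases hc : h i with a | b
          · exact ⟨a, rfl⟩
          · exact absurd ⟨by omega, b, by rw [← hc]; congr 1; exact Fin.ext h'⟩ hb
        · exact hK i h')
      exact ⟨m, Lf, Ld, s, ι, h1, h2, h3, fun x hx => by have := h4 x hx; omega, h5⟩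

/-- Every morphism `h : l₁ → l₂` of `□_p` factors as a composite of face maps followed by a
composite of degeneracies, `h = ι ∘ s`, and the lists can be chosen so that in application
order the second arguments of the face maps are strictly decreasing and the second arguments
of the degeneracies are non-increasing. -/
theorem boxP_factorization (p : ℕ∞) (l₁ l₂ : ℕ) (h : Fin l₁ → Fin l₂ ⊕ Bool)
    (hh : BoxP p l₁ l₂ h) :
    ∃ (m : ℕ) (Lf : List (Bool × ℕ)) (Ld : List ℕ)
      (s : Fin l₁ → Fin m ⊕ Bool) (ι : Fin m → Fin l₂ ⊕ Bool),
      FaceComp p l₁ m s Lf ∧ DegenComp p m l₂ ι Ld ∧ h = kcomp ι s ∧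
      (Lf.map Prod.snd).Chain' (· > ·) ∧ Ld.Chain' (· ≥ ·) := by
  obtain ⟨hp1, hp2, hm⟩ := boxP_props hh
  obtain ⟨m, Lf, Ld, s, ι, h1, h2, h3, -, h5, h6⟩ :=
    face_fact p l₂ hp2 l₁ l₁ h hp1 hm (fun i hi => by have := i.isLt; omega)
  exact ⟨m, Lf, Ld, s, ι, h1, h2, h3, h5.isChain, h6.isChain⟩
end

section
/- Let p ∈ ℕ ∪ {∞}. The canonical factorization of morphisms of □_p is unique: if two composites of the form (degeneracies) ∘ (face maps), each with the second arguments of the face maps strictly decreasing and the second arguments of the degeneracies non-increasing when read in composition order (from right to left), are equal as morphisms l₁ → l₂ of □, then they consist of the same list of face maps (same lengths, same second arguments, and same error-value labels ⋆ ∈ Bool) and the same list of degeneracies. In other words, the factorization of the preceding statement is a canonical form for each morphism of □_p. -/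
theorem aux_kcomp_inl {a b c : ℕ} (g : Fin b → Fin c ⊕ Bool) (f : Fin a → Fin b ⊕ Bool)
    {i : Fin a} {j : Fin b} (h : f i = Sum.inl j) : kcomp g f i = g j := by
  simp [kcomp, h]

theorem aux_kcomp_inr {a b c : ℕ} (g : Fin b → Fin c ⊕ Bool) (f : Fin a → Fin b ⊕ Bool)
    {i : Fin a} {t : Bool} (h : f i = Sum.inr t) : kcomp g f i = Sum.inr t := by
  simp [kcomp, h]

theorem aux_kcomp_assoc {a b c d : ℕ} (h : Fin c → Fin d ⊕ Bool) (g : Fin b → Fin c ⊕ Bool)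
    (f : Fin a → Fin b ⊕ Bool) : kcomp h (kcomp g f) = kcomp (kcomp h g) f := by
  funext i
  cases hf : f i <;> simp [kcomp, hf]

theorem aux_kcomp_id {a b : ℕ} (g : Fin a → Fin b ⊕ Bool) : kcomp g Sum.inl = g := by
  funext i; simp [kcomp]

theorem aux_face_at (b : Bool) (l k : ℕ) (hk : k ≤ l) (i : Fin (l + 1)) (hi : (i : ℕ) = k) :
    faceMap b l k hk i = Sum.inr b := by
  simp [faceMap, hi]

theorem aux_face_gt (b : Bool) (l k : ℕ) (hk : k ≤ l) (i : Fin (l + 1)) (hi : k < (i : ℕ)) :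
    faceMap b l k hk i = Sum.inl ⟨(i : ℕ) - 1, by have := i.isLt; omega⟩ := by
  have h1 : ¬ (i : ℕ) < k := by omega
  have h2 : ¬ (i : ℕ) = k := by omega
  simp [faceMap, h1, h2]

theorem aux_face_surj (b : Bool) (l k : ℕ) (hk : k ≤ l) (j : Fin l) :
    ∃ i, faceMap b l k hk i = Sum.inl j := by
  by_cases h : (j : ℕ) < k
  · exact ⟨⟨j, by omega⟩, by simp [faceMap, h]⟩
  · refine ⟨⟨j + 1, by omega⟩, ?_⟩
    rw [aux_face_gt]
    · simp
    · simp; omega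

theorem aux_face_cancel {l c : ℕ} (b : Bool) (k : ℕ) (hk : k ≤ l)
    (g g' : Fin l → Fin c ⊕ Bool)
    (h : kcomp g (faceMap b l k hk) = kcomp g' (faceMap b l k hk)) : g = g' := by
  funext j
  obtain ⟨i, hi⟩ := aux_face_surj b l k hk j
  have := congrFun h i
  rwa [aux_kcomp_inl _ _ hi, aux_kcomp_inl _ _ hi] at this

/-- a face composite has no errors above all of its second arguments -/
theorem aux_face_total {p : ℕ∞} {l m : ℕ} {s : Fin l → Fin m ⊕ Bool} {L : List (Bool × ℕ)}
    (hs : FaceComp p l m s L) (k : ℕ) (hL : ∀ x ∈ L.map Prod.snd, x < k) (i : Fin l)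
    (hi : k ≤ (i : ℕ)) (hch : (L.map Prod.snd).Pairwise (· > ·)) : ∃ j, s i = Sum.inl j := by
  induction hs generalizing k with
  | nil l hl => exact ⟨i, rfl⟩
  | cons b k' hk hl hs ih =>
    simp only [List.map_cons, List.pairwise_cons, List.mem_cons, forall_eq_or_imp] at hL hch
    have hg : k' < (i : ℕ) := by omega
    rw [aux_kcomp_inl _ _ (aux_face_gt b _ k' hk i hg)]
    exact ih k' hch.1 _ (by simp; omega) hch.2

theorem aux_face_head_le {p : ℕ∞} {l m m' c : ℕ} {f : Fin l → Fin m ⊕ Bool}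
    {f' : Fin l → Fin m' ⊕ Bool} {L : List (Bool × ℕ)}
    (hs : FaceComp p l m f L)
    (b b' : Bool) (k k' : ℕ) (hk : k ≤ l) (hk' : k' ≤ l)
    (hL : ∀ x ∈ L.map Prod.snd, x < k)
    (hch : (L.map Prod.snd).Pairwise (· > ·))
    (g : Fin m → Fin c ⊕ Bool) (g' : Fin m' → Fin c ⊕ Bool)
    (hg : ∀ i, ∃ j, g i = Sum.inl j)
    (heq : kcomp g (kcomp f (faceMap b l k hk)) = kcomp g' (kcomp f' (faceMap b' l k' hk'))) :
    k' ≤ k := by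
  by_contra hlt
  have h := congrFun heq ⟨k', by omega⟩
  rw [aux_kcomp_inr g' _ (aux_kcomp_inr f' _ (aux_face_at b' l k' hk' _ rfl)),
    aux_kcomp_assoc, aux_kcomp_inl _ _ (aux_face_gt b l k hk ⟨k', by omega⟩ (by simp; omega))] at h
  obtain ⟨j, hj⟩ := aux_face_total hs k hL ⟨k' - 1, by omega⟩ (by simp; omega) hch
  obtain ⟨j', hj'⟩ := hg j
  rw [aux_kcomp_inl g f hj, hj'] at h
  cases h

theorem aux_face_unique {p : ℕ∞} {l m m' c : ℕ} {s : Fin l → Fin m ⊕ Bool}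
    {s' : Fin l → Fin m' ⊕ Bool} {L L' : List (Bool × ℕ)}
    (hs : FaceComp p l m s L) (hs' : FaceComp p l m' s' L')
    (hch : (L.map Prod.snd).Pairwise (· > ·)) (hch' : (L'.map Prod.snd).Pairwise (· > ·))
    (g : Fin m → Fin c ⊕ Bool) (g' : Fin m' → Fin c ⊕ Bool)
    (hg : ∀ i, ∃ j, g i = Sum.inl j) (hg' : ∀ i, ∃ j, g' i = Sum.inl j)
    (heq : kcomp g s = kcomp g' s') : m = m' ∧ L = L' ∧ HEq g g' := by
  induction hs generalizing m' L' with
  | nil l hl =>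
    cases hs' with
    | nil => 
      rw [aux_kcomp_id, aux_kcomp_id] at heq
      subst heq; exact ⟨rfl, rfl, HEq.rfl⟩
    | cons b k hk hl' hs' =>
      exfalso
      have h := congrFun heq ⟨k, by omega⟩
      rw [aux_kcomp_inr g' _ (aux_kcomp_inr _ _ (aux_face_at b _ k hk _ rfl)), aux_kcomp_id] at h
      obtain ⟨j, hj⟩ := hg ⟨k, by omega⟩
      rw [hj] at h; cases h
  | cons b k hk hl hs ih =>
    cases hs' with
    | nil =>
      exfalso
      have h := congrFun heq ⟨k, by omega⟩
      rw [aux_kcomp_inr g _ (aux_kcomp_inr _ _ (aux_face_at b _ k hk _ rfl)), aux_kcomp_id] at h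
      obtain ⟨j, hj⟩ := hg' ⟨k, by omega⟩
      rw [hj] at h; cases h
    | cons b' k' hk' hl' hs' =>
      simp only [List.map_cons, List.pairwise_cons] at hch hch'
      have h1 := aux_face_head_le hs b b' k k' hk hk' hch.1 hch.2 g g' hg heq
      have h2 := aux_face_head_le hs' b' b k' k hk' hk hch'.1 hch'.2 g' g hg' heq.symm
      obtain rfl : k = k' := le_antisymm h2 h1
      have hb : b = b' := by
        have h := congrFun heq ⟨k, by omega⟩
        rw [aux_kcomp_inr g _ (aux_kcomp_inr _ _ (aux_face_at b _ k hk _ rfl)),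
          aux_kcomp_inr g' _ (aux_kcomp_inr _ _ (aux_face_at b' _ k hk' _ rfl))] at h
        exact Sum.inr.inj h
      subst hb
      rw [aux_kcomp_assoc, aux_kcomp_assoc] at heq
      obtain ⟨e1, e2, e3⟩ := ih hs' hch.2 hch'.2 g g' hg hg' (aux_face_cancel _ _ _ _ _ heq)
      exact ⟨e1, by rw [e2], e3⟩

theorem aux_degen_total {p : ℕ∞} {m l : ℕ} {g : Fin m → Fin l ⊕ Bool} {L : List ℕ}
    (h : DegenComp p m l g L) (i : Fin m) : ∃ j, g i = Sum.inl j := by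
  induction h with
  | nil => exact ⟨i, rfl⟩
  | cons k hk hl h ih =>
    obtain ⟨j, hj⟩ := ih
    rw [aux_kcomp_inl _ _ hj]
    unfold degenMap
    split <;> exact ⟨_, rfl⟩

theorem aux_degen_le {p : ℕ∞} {m l : ℕ} {g : Fin m → Fin l ⊕ Bool} {L : List ℕ}
    (h : DegenComp p m l g L) : m ≤ l := by
  induction h with
  | nil => exact le_rfl
  | cons k hk hl h ih => omega

theorem aux_degen_low {p : ℕ∞} {m l : ℕ} {g : Fin m → Fin l ⊕ Bool} {L : List ℕ}
    (h : DegenComp p m l g L) (k : ℕ) (hL : ∀ x ∈ L, k ≤ x) (j : Fin l) (hj : (j : ℕ) < k) :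
    ∃ i, g i = Sum.inl j := by
  induction h with
  | nil => exact ⟨j, rfl⟩
  | cons k' hk hl h ih =>
    have hk' : k ≤ k' := hL k' (by simp)
    obtain ⟨i, hi⟩ := ih (fun x hx => hL x (by simp [hx])) ⟨j, by omega⟩ hj
    refine ⟨i, ?_⟩
    rw [aux_kcomp_inl _ _ hi]
    have : (j : ℕ) < k' := by omega
    simp [degenMap, this]

theorem aux_degen_ne {l k : ℕ} (i : Fin l) (j : Fin (l + 1)) (hj : (j : ℕ) = k) :
    degenMap l k i ≠ Sum.inl j := by
  unfold degenMap
  intro h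
  split at h <;> (have := congrArg Fin.val (Sum.inl.inj h); simp at this; omega)

theorem aux_degen_inj {l k : ℕ} (i j : Fin l) (h : degenMap l k i = degenMap l k j) : i = j := by
  unfold degenMap at h
  ext
  split at h <;> split at h <;>
    (have := congrArg Fin.val (Sum.inl.inj h); simp at this; omega)

theorem aux_degen_last_le {p : ℕ∞} {m l : ℕ} {g g' : Fin m → Fin l ⊕ Bool} {L L' : List ℕ}
    (h : DegenComp p m l g L) (h' : DegenComp p m l g' L') (k k' : ℕ) (hk : k ≤ l) (hk' : k' ≤ l)
    (hL : ∀ x ∈ L, k ≤ x)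
    (heq : kcomp (degenMap l k) g = kcomp (degenMap l k') g') : k ≤ k' := by
  by_contra hlt
  obtain ⟨i, hi⟩ := aux_degen_low h k hL ⟨k', by omega⟩ (by simp; omega)
  have e := congrFun heq i
  obtain ⟨j, hj⟩ := aux_degen_total h' i
  rw [aux_kcomp_inl _ _ hi, aux_kcomp_inl _ _ hj] at e
  refine aux_degen_ne j ⟨k', by omega⟩ rfl (e.symm.trans ?_)
  have : k' < k := by omega
  simp [degenMap, this]

theorem aux_degen_unique {p : ℕ∞} {m l : ℕ} {g g' : Fin m → Fin l ⊕ Bool} {L L' : List ℕ}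
    (h : DegenComp p m l g L) (h' : DegenComp p m l g' L')
    (hch : L.Pairwise (· ≥ ·)) (hch' : L'.Pairwise (· ≥ ·)) (heq : g = g') : L = L' := by
  induction h generalizing L' with
  | nil =>
    cases h' with
    | nil => rfl
    | cons k hk hl h' => have := aux_degen_le h'; omega
  | cons k hk hl h ih =>
    cases h' with
    | nil => have := aux_degen_le h; omega
    | cons k' hk' hl' h' =>
      simp only [List.pairwise_append, List.mem_singleton, forall_eq] at hch hch'
      have h1 := aux_degen_last_le h h' k k' hk hk' hch.2.2 heq
      have h2 := aux_degen_last_le h' h k' k hk' hk hch'.2.2 heq.symm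
      obtain rfl : k = k' := le_antisymm h1 h2
      rw [ih h' hch.1 hch'.1]
      funext i
      obtain ⟨j, hj⟩ := aux_degen_total h i
      obtain ⟨j', hj'⟩ := aux_degen_total h' i
      have e := congrFun heq i
      rw [aux_kcomp_inl _ _ hj, aux_kcomp_inl _ _ hj'] at e
      rw [hj, hj', aux_degen_inj _ _ e]

/-- Uniqueness of the canonical factorization: two composites of the form
(degeneracies) ∘ (face maps), each with strictly decreasing second arguments of the face maps
and non-increasing second arguments of the degeneracies (read in application order), that are
equal as morphisms `l₁ → l₂` of `□` consist of the same lists of face maps and degeneracies. -/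
theorem boxP_factorization_unique (p : ℕ∞) (l₁ l₂ m m' : ℕ)
    (Lf Lf' : List (Bool × ℕ)) (Ld Ld' : List ℕ)
    (s : Fin l₁ → Fin m ⊕ Bool) (ι : Fin m → Fin l₂ ⊕ Bool)
    (s' : Fin l₁ → Fin m' ⊕ Bool) (ι' : Fin m' → Fin l₂ ⊕ Bool)
    (hs : FaceComp p l₁ m s Lf) (hι : DegenComp p m l₂ ι Ld)
    (hf : (Lf.map Prod.snd).Chain' (· > ·)) (hd : Ld.Chain' (· ≥ ·))
    (hs' : FaceComp p l₁ m' s' Lf') (hι' : DegenComp p m' l₂ ι' Ld')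
    (hf' : (Lf'.map Prod.snd).Chain' (· > ·)) (hd' : Ld'.Chain' (· ≥ ·))
    (heq : kcomp ι s = kcomp ι' s') :
    m = m' ∧ Lf = Lf' ∧ Ld = Ld' := by
  have hF := aux_face_unique hs hs' (List.isChain_iff_pairwise.mp hf)
    (List.isChain_iff_pairwise.mp hf') ι ι' (aux_degen_total hι) (aux_degen_total hι') heq
  obtain ⟨rfl, e2, e3⟩ := hF
  exact ⟨rfl, e2, aux_degen_unique hι hι' (List.isChain_iff_pairwise.mp hd)
    (List.isChain_iff_pairwise.mp hd') (eq_of_heq e3)⟩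
end
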